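/- arXiv:2210.07152 — 2 statements merged into one kernel-verified Lean document; each statement's English description precedes it below -/
import Mathlib

section
/- Let C be a compact subset of ℝ^m, ε > 0, and let z_1,...,z_K ∈ C be a maximal 2ε-net in C. Define α_k(x) := max(3ε − ||x − z_k||, 0), ᾱ(x) := Σ_{k=1}^K α_k(x), and β_k(x) := α_k(x)/ᾱ(x) for x ∈ C (note ᾱ(x) ≥ ε > 0 on C). Then: (i) β_k(x) ≥ 0 for all x ∈ C and all k; (ii) Σ_{k=1}^K β_k(x) = 1 for all x ∈ C; (iii) β_k(x) = 0 for all x ∈ C with ||x − z_k|| ≥ 3ε; (iv) for each x ∈ C there are at most 4^m indices k with β_k(x) > 0; and (v) each β_k is Lipschitz on C with Lipschitz constant at most 4^{m+2}/ε. -/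
open Finset

noncomputable section

/-- The tent weight `α_k(x) = [3ε − ‖x − z_k‖]₊` associated with a net point `z_k`. -/
def tentWeight {m K : ℕ} (z : Fin K → EuclideanSpace ℝ (Fin m)) (ε : ℝ) (k : Fin K)
    (x : EuclideanSpace ℝ (Fin m)) : ℝ :=
  max (3 * ε - ‖x - z k‖) 0

/-- The normalized weight `β_k(x) = α_k(x) / ∑_j α_j(x)`. -/
def partitionWeight {m K : ℕ} (z : Fin K → EuclideanSpace ℝ (Fin m)) (ε : ℝ) (k : Fin K)
    (x : EuclideanSpace ℝ (Fin m)) : ℝ :=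
  tentWeight z ε k x / ∑ j, tentWeight z ε j x

/-!
The balls `B(z_k, ε)` are disjoint and those with `‖x - z_k‖ < 3ε` lie in `B(x, 4ε)`, so comparing
volumes at most `4 ^ m` tents are nonzero at any given point. Hence at most `2 * 4 ^ m` terms
contribute to the difference of the total weight at two points, and since each tent is
`1`-Lipschitz, the total weight is `2 * 4 ^ m`-Lipschitz. It is at least `ε` on `C`, because some
net point is within `2ε`, and the quotient rule then bounds the Lipschitz constant of the normalized
weights by `(2 * 4 ^ m + 1) / ε ≤ 4 ^ (m + 2) / ε`.
-/

section Packing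

open MeasureTheory Module

variable {ι E : Type*} [NormedAddCommGroup E] [NormedSpace ℝ E] [FiniteDimensional ℝ E]

lemma card_mul_pow_finrank_le_of_pairwiseDisjoint_ball {s : Finset ι} {z : ι → E} {x : E}
    {r R : ℝ} (hr : 0 < r) (hR : 0 < R)
    (hdisj : (s : Set ι).PairwiseDisjoint fun i ↦ Metric.ball (z i) r)
    (hsub : ∀ i ∈ s, Metric.ball (z i) r ⊆ Metric.ball x R) :
    #s * r ^ finrank ℝ E ≤ R ^ finrank ℝ E := by
  borelize E
  let μ : Measure E := Measure.addHaar
  have hvol : #s * ENNReal.ofReal (r ^ finrank ℝ E) * μ (Metric.ball 0 1) ≤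
      ENNReal.ofReal (R ^ finrank ℝ E) * μ (Metric.ball 0 1) :=
    calc
      _ = μ (⋃ i ∈ s, Metric.ball (z i) r) := by
        rw [measure_biUnion_finset hdisj fun _ _ ↦ measurableSet_ball]
        simp only [μ.addHaar_ball_of_pos _ hr, sum_const, nsmul_eq_mul, mul_assoc]
      _ ≤ μ (Metric.ball x R) := measure_mono (Set.iUnion₂_subset hsub)
      _ = _ := μ.addHaar_ball_of_pos x hR
  rw [ENNReal.mul_le_mul_iff_left (Metric.measure_ball_pos μ _ one_pos).ne'
    measure_ball_lt_top.ne] at hvol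
  simpa [hr.le] using ENNReal.toReal_le_of_le_ofReal (by positivity) hvol

lemma card_le_one_add_div_pow_finrank_of_separated {s : Finset ι} {z : ι → E} {x : E} {r R : ℝ}
    (hr : 0 < r) (hR : 0 ≤ R) (hsep : (s : Set ι).Pairwise fun i j ↦ 2 * r ≤ dist (z i) (z j))
    (hs : ∀ i ∈ s, dist x (z i) ≤ R) :
    (#s : ℝ) ≤ (1 + R / r) ^ finrank ℝ E := by
  have hdisj : (s : Set ι).PairwiseDisjoint fun i ↦ Metric.ball (z i) r := fun i hi j hj hij ↦
    Metric.ball_disjoint_ball (by linarith [hsep hi hj hij])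
  have hsub : ∀ i ∈ s, Metric.ball (z i) r ⊆ Metric.ball x (r + R) := fun i hi ↦
    Metric.ball_subset_ball' (by linarith [hs i hi, dist_comm x (z i)])
  rw [← div_self hr.ne', ← add_div, div_pow, le_div_iff₀ (by positivity)]
  exact card_mul_pow_finrank_le_of_pairwiseDisjoint_ball hr (by positivity) hdisj hsub

end Packing

open scoped Classical in
lemma abs_sum_sub_sum_le_card_support_nsmul {ι G : Type*} [Fintype ι] [AddCommGroup G]
    [LinearOrder G] [IsOrderedAddMonoid G] {u v : ι → G} {η : G} (huv : ∀ i, |u i - v i| ≤ η) :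
    |∑ i, u i - ∑ i, v i| ≤ (#{i | u i ≠ 0} + #{i | v i ≠ 0}) • η := by
  rcases isEmpty_or_nonempty ι with _ | ⟨⟨i₀⟩⟩
  · simp
  have hη : 0 ≤ η := (abs_nonneg _).trans (huv i₀)
  let s : Finset ι := ({i | u i ≠ 0} : Finset ι) ∪ ({i | v i ≠ 0} : Finset ι)
  have hs : ∀ i ∉ s, |u i - v i| = 0 := by simp +contextual [s]
  calc |∑ i, u i - ∑ i, v i|
      ≤ ∑ i, |u i - v i| := by
        rw [← sum_sub_distrib]
        exact abs_sum_le_sum_abs _ _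
    _ = ∑ i ∈ s, |u i - v i| := (sum_subset (subset_univ s) fun i _ hi ↦ hs i hi).symm
    _ ≤ #s • η := sum_le_card_nsmul s _ η fun i _ ↦ huv i
    _ ≤ (#{i | u i ≠ 0} + #{i | v i ≠ 0}) • η := nsmul_le_nsmul_left hη (card_union_le _ _)

section NormalizedWeight

variable {ι 𝕜 : Type*} [Fintype ι]

/-- The weights `u` rescaled to have total mass one; this is the passage from the `α_k(x)` to the
`β_k(x)` at a fixed point `x`. All values are `0` if the total mass is zero. -/
def normalizedWeight [DivisionSemiring 𝕜] (u : ι → 𝕜) (i : ι) : 𝕜 :=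
  u i / ∑ j, u j

lemma sum_normalizedWeight [DivisionSemiring 𝕜] {u : ι → 𝕜} (hu : ∑ i, u i ≠ 0) :
    ∑ i, normalizedWeight u i = 1 := by
  simp only [normalizedWeight, ← sum_div, div_self hu]

lemma normalizedWeight_eq_zero [DivisionSemiring 𝕜] {u : ι → 𝕜} {i : ι} (hi : u i = 0) :
    normalizedWeight u i = 0 := by
  rw [normalizedWeight, hi, zero_div]

variable [Field 𝕜] [LinearOrder 𝕜] [IsStrictOrderedRing 𝕜] {u v : ι → 𝕜}

lemma normalizedWeight_nonneg (hu : ∀ i, 0 ≤ u i) (i : ι) : 0 ≤ normalizedWeight u i :=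
  div_nonneg (hu i) (sum_nonneg fun j _ ↦ hu j)

lemma normalizedWeight_le_one (hu : ∀ i, 0 ≤ u i) (i : ι) : normalizedWeight u i ≤ 1 :=
  div_le_one_of_le₀ (single_le_sum (fun j _ ↦ hu j) (mem_univ i)) (sum_nonneg fun j _ ↦ hu j)

lemma abs_normalizedWeight_sub_le (hu : 0 < ∑ i, u i) (hv : ∀ i, 0 ≤ v i)
    (hv_sum : ∑ i, v i ≠ 0) (i : ι) :
    |normalizedWeight u i - normalizedWeight v i| ≤
      (|u i - v i| + |∑ j, u j - ∑ j, v j|) / ∑ j, u j := by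
  have quotient_rule : normalizedWeight u i - normalizedWeight v i =
      (u i - v i - normalizedWeight v i * (∑ j, u j - ∑ j, v j)) / ∑ j, u j := by
    simp only [normalizedWeight]
    field_simp
    ring
  rw [quotient_rule, abs_div, abs_of_pos hu]
  gcongr
  calc |u i - v i - normalizedWeight v i * (∑ j, u j - ∑ j, v j)|
      ≤ |u i - v i| + normalizedWeight v i * |∑ j, u j - ∑ j, v j| := by
        grw [abs_sub, abs_mul, abs_of_nonneg (normalizedWeight_nonneg hv i)]
    _ ≤ |u i - v i| + |∑ j, u j - ∑ j, v j| := by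
        grw [normalizedWeight_le_one hv i, one_mul]

open scoped Classical in
lemma abs_normalizedWeight_sub_le_of_card_support_le {δ η : 𝕜} {N : ℕ} (hδ : 0 < δ)
    (hu : δ ≤ ∑ i, u i) (hv : ∀ i, 0 ≤ v i) (hv_sum : ∑ i, v i ≠ 0)
    (hu_card : #{i | u i ≠ 0} ≤ N) (hv_card : #{i | v i ≠ 0} ≤ N)
    (huv : ∀ i, |u i - v i| ≤ η) (i : ι) :
    |normalizedWeight u i - normalizedWeight v i| ≤ (2 * N + 1) / δ * η := by
  have hη : 0 ≤ η := (abs_nonneg _).trans (huv i)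
  have hu_sum : 0 ≤ ∑ j, u j := hδ.le.trans hu
  calc |normalizedWeight u i - normalizedWeight v i|
      ≤ (|u i - v i| + |∑ j, u j - ∑ j, v j|) / ∑ j, u j :=
        abs_normalizedWeight_sub_le (hδ.trans_le hu) hv hv_sum i
    _ ≤ (η + (N + N : ℕ) * η) / δ := by
        grw [abs_sum_sub_sum_le_card_support_nsmul huv, nsmul_eq_mul, huv i, hu_card, hv_card, hu]
    _ = (2 * N + 1) / δ * η := by
        push_cast
        ring

end NormalizedWeight

section Tent

variable {X : Type*} [PseudoMetricSpace X] {r : ℝ} {c x : X}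

/-- The tent of radius `r` centred at `c`, generalizing `tentWeight` to metric spaces. -/
def tent (r : ℝ) (c x : X) : ℝ :=
  max (r - dist x c) 0

lemma tent_nonneg (r : ℝ) (c x : X) : 0 ≤ tent r c x :=
  le_max_right _ _

lemma tent_eq_zero_iff : tent r c x = 0 ↔ r ≤ dist x c := by
  rw [tent, max_eq_right_iff, sub_nonpos]

lemma abs_tent_sub_tent_le (r : ℝ) (c x y : X) : |tent r c x - tent r c y| ≤ dist x y :=
  calc |tent r c x - tent r c y|
      ≤ |(r - dist x c) - (r - dist y c)| := abs_max_sub_max_le_abs _ _ _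
    _ = |dist y c - dist x c| := by rw [sub_sub_sub_cancel_left]
    _ ≤ dist x y := dist_comm x y ▸ abs_dist_sub_le y x c

lemma sub_dist_le_sum_tent {ι : Type*} [Fintype ι] (r : ℝ) (z : ι → X) (i : ι) (x : X) :
    r - dist x (z i) ≤ ∑ j, tent r (z j) x :=
  (le_max_left _ _).trans
    (single_le_sum (f := fun j ↦ tent r (z j) x) (fun j _ ↦ tent_nonneg r (z j) x) (mem_univ i))

open scoped Classical in
lemma card_tent_ne_zero_le {ι E : Type*} [Fintype ι] [NormedAddCommGroup E] [NormedSpace ℝ E]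
    [FiniteDimensional ℝ E] {z : ι → E} {ρ R : ℝ} (hρ : 0 < ρ) (hR : 0 ≤ R)
    (hsep : Pairwise fun i j ↦ 2 * ρ ≤ dist (z i) (z j)) (x : E) :
    (#{i | tent R (z i) x ≠ 0} : ℝ) ≤ (1 + R / ρ) ^ Module.finrank ℝ E := by
  refine card_le_one_add_div_pow_finrank_of_separated (x := x) hρ hR (hsep.set_pairwise _) ?_
  simp only [mem_filter_univ, ne_eq, tent_eq_zero_iff, not_le]
  exact fun i hi ↦ hi.le

end Tent

open scoped Classical in
theorem lipschitz_partition_of_unity_general {ι E : Type*} [Fintype ι] [NormedAddCommGroup E]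
    [NormedSpace ℝ E] [FiniteDimensional ℝ E] {ε : ℝ} (hε : 0 < ε) {C : Set E} {z : ι → E}
    (hsep : Pairwise fun k j ↦ 2 * ε ≤ dist (z k) (z j))
    (hcover : ∀ x ∈ C, ∃ k, dist x (z k) < 2 * ε) :
    let β (k : ι) (x : E) : ℝ := normalizedWeight (fun j ↦ tent (3 * ε) (z j) x) k
    (∀ x ∈ C, ∀ k, 0 ≤ β k x) ∧
    (∀ x ∈ C, ∑ k, β k x = 1) ∧
    (∀ x ∈ C, ∀ k, 3 * ε ≤ dist x (z k) → β k x = 0) ∧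
    (∀ x ∈ C, #{k | 0 < β k x} ≤ 4 ^ Module.finrank ℝ E) ∧
    (∀ k, ∀ x ∈ C, ∀ y ∈ C,
      |β k x - β k y| ≤ 4 ^ (Module.finrank ℝ E + 2) / ε * dist x y) := by
  have hsum : ∀ x ∈ C, ε ≤ ∑ k, tent (3 * ε) (z k) x := fun x hx ↦ by
    obtain ⟨k, hk⟩ := hcover x hx
    linarith [sub_dist_le_sum_tent (3 * ε) z k x]
  have hsum_ne : ∀ x ∈ C, ∑ k, tent (3 * ε) (z k) x ≠ 0 := fun x hx ↦
    (hε.trans_le (hsum x hx)).ne'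
  have hcard : ∀ x, #{k | tent (3 * ε) (z k) x ≠ 0} ≤ 4 ^ Module.finrank ℝ E := fun x ↦ by
    have hcard_real := card_tent_ne_zero_le hε (by positivity : 0 ≤ 3 * ε) hsep x
    rw [mul_div_cancel_right₀ _ hε.ne', (by norm_num : (1 + 3 : ℝ) = 4)] at hcard_real
    exact_mod_cast hcard_real
  refine ⟨fun x _ ↦ normalizedWeight_nonneg fun j ↦ tent_nonneg _ (z j) x,
    fun x hx ↦ sum_normalizedWeight (hsum_ne x hx),
    fun x _ k hk ↦ normalizedWeight_eq_zero (tent_eq_zero_iff.2 hk),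
    fun x _ ↦ ?_, fun k x hx y hy ↦ ?_⟩
  · exact (card_le_card (monotone_filter_right _ fun k _ hβ hα ↦
      hβ.ne' (normalizedWeight_eq_zero hα))).trans (hcard x)
  · grw [abs_normalizedWeight_sub_le_of_card_support_le hε (hsum x hx)
      (fun j ↦ tent_nonneg _ (z j) y) (hsum_ne y hy) (hcard x) (hcard y)
      (fun j ↦ abs_tent_sub_tent_le _ (z j) x y) k]
    gcongr
    have hone : (1 : ℝ) ≤ 4 ^ Module.finrank ℝ E := one_le_pow₀ (by norm_num)
    push_cast
    linarith [pow_add (4 : ℝ) (Module.finrank ℝ E) 2]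

lemma partitionWeight_eq_normalizedWeight {m K : ℕ} (z : Fin K → EuclideanSpace ℝ (Fin m)) (ε : ℝ)
    (k : Fin K) (x : EuclideanSpace ℝ (Fin m)) :
    partitionWeight z ε k x = normalizedWeight (fun j ↦ tent (3 * ε) (z j) x) k := by
  simp only [partitionWeight, tentWeight, normalizedWeight, tent, dist_eq_norm]

open scoped Classical in
/-- **A Lipschitz partition of unity subordinate to a maximal `2ε`-net.**
Let `C ⊆ ℝ^m` be compact, `ε > 0`, and let `z_1, …, z_K ∈ C` be a maximal `2ε`-net in `C`
(pairwise distances at least `2ε`, and every point of `C` is within distance `< 2ε` of some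
`z_k`). With `α_k(x) = [3ε − ‖x − z_k‖]₊`, `ᾱ(x) = ∑_k α_k(x)` and `β_k = α_k/ᾱ`:
(i) `β_k ≥ 0` on `C`; (ii) `∑_k β_k = 1` on `C`; (iii) `β_k(x) = 0` whenever
`‖x − z_k‖ ≥ 3ε`; (iv) for each `x ∈ C` at most `4^m` of the `β_k(x)` are positive;
(v) each `β_k` is Lipschitz on `C` with constant at most `4^(m+2)/ε`. -/
theorem lipschitz_partition_of_unity
    (m K : ℕ) (ε : ℝ) (hε : 0 < ε)
    (C : Set (EuclideanSpace ℝ (Fin m))) (hC : IsCompact C)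
    (z : Fin K → EuclideanSpace ℝ (Fin m)) (hzC : ∀ k, z k ∈ C)
    (hsep : ∀ k j, k ≠ j → 2 * ε ≤ ‖z k - z j‖)
    (hmax : ∀ x ∈ C, ∃ k, ‖x - z k‖ < 2 * ε) :
    (∀ x ∈ C, ∀ k, 0 ≤ partitionWeight z ε k x) ∧
    (∀ x ∈ C, ∑ k, partitionWeight z ε k x = 1) ∧
    (∀ x ∈ C, ∀ k, 3 * ε ≤ ‖x - z k‖ → partitionWeight z ε k x = 0) ∧
    (∀ x ∈ C, (Finset.univ.filter fun k => 0 < partitionWeight z ε k x).card ≤ 4 ^ m) ∧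
    (∀ k, ∀ x ∈ C, ∀ y ∈ C,
      |partitionWeight z ε k x - partitionWeight z ε k y| ≤ 4 ^ (m + 2) / ε * ‖x - y‖) := by
  simp only [← dist_eq_norm] at hsep hmax ⊢
  simpa only [partitionWeight_eq_normalizedWeight, finrank_euclideanSpace_fin] using
    lipschitz_partition_of_unity_general hε hsep hmax
end
end

section
/- Let C ⊆ ℝ^m be compact, L ≥ 1, and let W_L be the set of functions w : C → [0,1] with Lipschitz constant at most L. Then for every ε > 0 there exist finitely many functions f_1,...,f_d ∈ W_L such that for every w ∈ W_L there is a vector ϖ ∈ [0,1]^d with max_{x∈C} |w(x) − Σ_{i=1}^d ϖ_i f_i(x)| < ε; moreover, one can take d ≤ c · L^m/ε^{m+1} for a constant c depending only on the dimension m and the diameter of C. -/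
open Finset

/-!
Cover `C` by `n` balls of radius `r` with centres `c k ∈ C`, and let `M k` be the running maximum of
the first `k` truncated cones `min 1 (2 - dist x (c j) / r)`. A maximum of Lipschitz functions has
the same Lipschitz constant however many functions enter, so the increments `φ k = M (k + 1) - M k`
form a partition of unity on `C` that is `2 / r`-Lipschitz with no control on the overlaps of the
balls. As `φ k` vanishes at distance `2 r` from `c k`, the sum `∑ k, w (c k) * φ k` is within
`2 L r` of `w`. Taking `N` copies of each `φ k / N`, with `N` of order `1 / ε`, brings the Lipschitz
constant down to `L` without changing the coefficients `w (c k)`. In dimension `m` a volume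
argument bounds `n` by a multiple of `(L / ε) ^ m`.
-/

section LipschitzUnit

variable {X ι : Type*} [PseudoMetricSpace X] {C : Set X} {L ε : ℝ}

/-- The class `W_L` of functions with values in `[0, 1]` and Lipschitz constant at most `L`. Its
elements are total functions on `X`, constrained on `C` only. -/
def lipschitzUnitOn (C : Set X) (L : ℝ) : Set (X → ℝ) :=
  {w | (∀ x ∈ C, w x ∈ Set.Icc 0 1) ∧ ∀ x ∈ C, ∀ y ∈ C, |w x - w y| ≤ L * dist x y}

/-- The family `f` lies in `lipschitzUnitOn C L`, and every member of that class is uniformly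
`ε`-close on `C` to a combination of `f` with coefficients in `[0, 1]`. This is the notion of an
approximate basis in `lipschitz_basis`, over an arbitrary finite index type. -/
def IsLipschitzApproxBasis [Fintype ι] (C : Set X) (L ε : ℝ) (f : ι → X → ℝ) : Prop :=
  (∀ i, f i ∈ lipschitzUnitOn C L) ∧
    ∀ w ∈ lipschitzUnitOn C L, ∃ ϖ : ι → ℝ, (∀ i, ϖ i ∈ Set.Icc 0 1) ∧
      ∀ x ∈ C, |w x - ∑ i, ϖ i * f i x| < ε

lemma isLipschitzApproxBasis_of_isEmpty [Fintype ι] [IsEmpty ι] (hε : 1 < ε) (f : ι → X → ℝ) :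
    IsLipschitzApproxBasis C L ε f := by
  refine ⟨isEmptyElim, fun w hw => ⟨isEmptyElim, isEmptyElim, fun x hx => ?_⟩⟩
  obtain ⟨hw0, hw1⟩ := hw.1 x hx
  rw [univ_eq_empty, sum_empty, sub_zero, abs_of_nonneg hw0]
  exact hw1.trans_lt hε

lemma IsLipschitzApproxBasis.comp_equiv {κ : Type*} [Fintype ι] [Fintype κ] {f : ι → X → ℝ}
    (hf : IsLipschitzApproxBasis C L ε f) (e : κ ≃ ι) :
    IsLipschitzApproxBasis C L ε (f ∘ e) := by
  refine ⟨fun j => hf.1 (e j), fun w hw => ?_⟩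
  obtain ⟨ϖ, hϖ, happrox⟩ := hf.2 w hw
  refine ⟨ϖ ∘ e, fun j => hϖ (e j), fun x hx => ?_⟩
  simpa only [Function.comp_apply, e.sum_comp fun i => ϖ i * f i x] using happrox x hx

end LipschitzUnit

section Bump

variable {X : Type*} [PseudoMetricSpace X] {r : ℝ} {c : ℕ → X} {n k : ℕ} {x y : X}

/-- The running maximum of the truncated cones of height one around the centres `c 0, …, c (n - 1)`:
it is one at distance at most `r` from some centre and vanishes at distance at least `2 * r` from
all of them. -/
noncomputable def bumpMax (r : ℝ) (c : ℕ → X) : ℕ → X → ℝ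
  | 0, _ => 0
  | n + 1, x => max (bumpMax r c n x) (min 1 (2 - dist x (c n) / r))

/-- The increments of `bumpMax`, which form a partition of unity subordinate to the balls of radius
`2 * r` around the centres. -/
noncomputable def bumpPartition (r : ℝ) (c : ℕ → X) (k : ℕ) (x : X) : ℝ :=
  bumpMax r c (k + 1) x - bumpMax r c k x

lemma monotone_bumpMax (r : ℝ) (c : ℕ → X) (x : X) : Monotone fun n => bumpMax r c n x :=
  monotone_nat_of_le_succ fun _ => le_max_left _ _

lemma bumpMax_nonneg : 0 ≤ bumpMax r c n x :=
  monotone_bumpMax r c x n.zero_le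

lemma bumpMax_le_one : bumpMax r c n x ≤ 1 := by
  induction n with
  | zero => exact zero_le_one
  | succ n ih => exact max_le ih (min_le_left _ _)

lemma bumpMax_eq_one (hr : 0 < r) (hk : k < n) (hx : dist x (c k) ≤ r) : bumpMax r c n x = 1 := by
  have hcone : (1 : ℝ) ≤ 2 - dist x (c k) / r := by linarith [(div_le_one hr).2 hx]
  have hsucc : 1 ≤ bumpMax r c (k + 1) x := (le_min le_rfl hcone).trans (le_max_right _ _)
  exact bumpMax_le_one.antisymm (hsucc.trans (monotone_bumpMax r c x hk))

lemma abs_bumpMax_sub_le (hr : 0 ≤ r) : |bumpMax r c n x - bumpMax r c n y| ≤ dist x y / r := by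
  induction n with
  | zero => simpa [bumpMax] using div_nonneg dist_nonneg hr
  | succ n ih =>
    refine (abs_max_sub_max_le_max _ _ _ _).trans (max_le ih ?_)
    calc |min 1 (2 - dist x (c n) / r) - min 1 (2 - dist y (c n) / r)|
        ≤ max |1 - 1| |(2 - dist x (c n) / r) - (2 - dist y (c n) / r)| :=
          abs_min_sub_min_le_max _ _ _ _
      _ = |dist x (c n) - dist y (c n)| / r := by
          rw [sub_self, abs_zero, max_eq_right (abs_nonneg _), sub_sub_sub_cancel_left, ← sub_div,
            abs_div, abs_of_nonneg hr, abs_sub_comm]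
      _ ≤ dist x y / r := by gcongr; exact abs_dist_sub_le x y (c n)

lemma bumpPartition_nonneg : 0 ≤ bumpPartition r c k x :=
  sub_nonneg.2 (monotone_bumpMax r c x k.le_succ)

lemma bumpPartition_le_one : bumpPartition r c k x ≤ 1 :=
  (sub_le_self _ bumpMax_nonneg).trans bumpMax_le_one

lemma abs_bumpPartition_sub_le (hr : 0 ≤ r) :
    |bumpPartition r c k x - bumpPartition r c k y| ≤ 2 / r * dist x y :=
  calc |bumpPartition r c k x - bumpPartition r c k y|
      = |(bumpMax r c (k + 1) x - bumpMax r c (k + 1) y) -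
          (bumpMax r c k x - bumpMax r c k y)| := by
        rw [bumpPartition, bumpPartition, sub_sub_sub_comm]
    _ ≤ dist x y / r + dist x y / r :=
        (abs_sub _ _).trans (add_le_add (abs_bumpMax_sub_le hr) (abs_bumpMax_sub_le hr))
    _ = 2 / r * dist x y := by ring

lemma bumpPartition_eq_zero (hr : 0 < r) (hx : 2 * r ≤ dist x (c k)) :
    bumpPartition r c k x = 0 := by
  have hcone : 2 - dist x (c k) / r ≤ 0 := by linarith [(le_div_iff₀ hr).2 hx]
  exact sub_eq_zero.2 (max_eq_left ((min_le_right _ _).trans (hcone.trans bumpMax_nonneg)))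

lemma sum_bumpPartition (hr : 0 < r) (hx : ∃ k < n, dist x (c k) ≤ r) :
    ∑ k : Fin n, bumpPartition r c k x = 1 := by
  obtain ⟨k, hk, hxk⟩ := hx
  rw [Fin.sum_univ_eq_sum_range (bumpPartition r c · x)]
  simp only [bumpPartition]
  rw [sum_range_sub (bumpMax r c · x), bumpMax_eq_one hr hk hxk, bumpMax, sub_zero]

lemma abs_sub_sum_mul_bumpPartition_le {C : Set X} {L : ℝ} {w : X → ℝ} (hr : 0 < r) (hL : 0 ≤ L)
    (hc : ∀ k < n, c k ∈ C) (hw : w ∈ lipschitzUnitOn C L) (hxC : x ∈ C)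
    (hx : ∃ k < n, dist x (c k) ≤ r) :
    |w x - ∑ k : Fin n, w (c k) * bumpPartition r c k x| ≤ L * (2 * r) := by
  have hterm (k : Fin n) :
      |w x - w (c k)| * bumpPartition r c k x ≤ L * (2 * r) * bumpPartition r c k x := by
    rcases le_or_gt (2 * r) (dist x (c k)) with hfar | hnear
    · simp only [bumpPartition_eq_zero hr hfar, mul_zero, le_refl]
    · gcongr
      · exact bumpPartition_nonneg
      · exact (hw.2 x hxC _ (hc k k.2)).trans (by gcongr)
  calc |w x - ∑ k : Fin n, w (c k) * bumpPartition r c k x|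
      = |∑ k : Fin n, (w x - w (c k)) * bumpPartition r c k x| := by
        simp only [sub_mul, sum_sub_distrib]
        rw [← mul_sum, sum_bumpPartition hr hx, mul_one]
    _ ≤ ∑ k : Fin n, |w x - w (c k)| * bumpPartition r c k x := by
        refine (abs_sum_le_sum_abs _ _).trans_eq (sum_congr rfl fun k _ => ?_)
        rw [abs_mul, abs_of_nonneg bumpPartition_nonneg]
    _ ≤ ∑ k : Fin n, L * (2 * r) * bumpPartition r c k x := sum_le_sum fun k _ => hterm k
    _ = L * (2 * r) := by rw [← mul_sum, sum_bumpPartition hr hx, mul_one]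

lemma bumpPartition_div_mem_lipschitzUnitOn {C : Set X} {L : ℝ} {N : ℕ} (hr : 0 < r)
    (hNL : 2 / r ≤ N * L) : (fun x => bumpPartition r c k x / N) ∈ lipschitzUnitOn C L := by
  have hN : N ≠ 0 := by
    rintro rfl
    exact (div_pos two_pos hr).not_ge (by simpa only [Nat.cast_zero, zero_mul] using hNL)
  have hN' : (1 : ℝ) ≤ N := Nat.one_le_cast.2 (Nat.pos_of_ne_zero hN)
  refine ⟨fun x _ => ⟨div_nonneg bumpPartition_nonneg N.cast_nonneg,
    div_le_one_of_le₀ (bumpPartition_le_one.trans hN') N.cast_nonneg⟩, fun x _ y _ => ?_⟩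
  rw [← sub_div, abs_div, Nat.abs_cast, div_le_iff₀ (zero_lt_one.trans_le hN')]
  calc |bumpPartition r c k x - bumpPartition r c k y|
      ≤ 2 / r * dist x y := abs_bumpPartition_sub_le hr.le
    _ ≤ N * L * dist x y := by gcongr
    _ = L * dist x y * N := by ring

theorem isLipschitzApproxBasis_bumpPartition {C : Set X} {L ε : ℝ} {N : ℕ} (hr : 0 < r)
    (hNL : 2 / r ≤ N * L) (hε : L * (2 * r) < ε)
    (hc : ∀ k < n, c k ∈ C) (hcover : ∀ x ∈ C, ∃ k < n, dist x (c k) ≤ r) :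
    IsLipschitzApproxBasis C L ε
      fun (p : Fin N × Fin n) x => bumpPartition r c p.2 x / N := by
  have hpos : 0 < N * L := (div_pos two_pos hr).trans_le hNL
  have hL : 0 < L := pos_of_mul_pos_right hpos N.cast_nonneg
  have hN : (N : ℝ) ≠ 0 := left_ne_zero_of_mul hpos.ne'
  refine ⟨fun p => bumpPartition_div_mem_lipschitzUnitOn hr hNL, fun w hw =>
    ⟨fun p => w (c p.2), fun p => hw.1 _ (hc p.2 p.2.2), fun x hx => ?_⟩⟩
  have hcopies : ∑ p : Fin N × Fin n, w (c p.2) * (bumpPartition r c p.2 x / N) =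
      ∑ k : Fin n, w (c k) * bumpPartition r c k x := by
    simp only [Fintype.sum_prod_type]
    rw [sum_const, card_univ, Fintype.card_fin, nsmul_eq_mul, mul_sum]
    refine sum_congr rfl fun k _ => ?_
    field_simp
  rw [hcopies]
  exact (abs_sub_sum_mul_bumpPartition_le hr hL.le hc hw hx (hcover x hx)).trans_lt hε

end Bump

section Covering

open Metric Module MeasureTheory
open scoped NNReal

lemma packingNumber_ne_top_of_totallyBounded {X : Type*} [PseudoMetricSpace X] {C : Set X}
    {r : ℝ≥0} (hr : r ≠ 0) (hC : TotallyBounded C) : packingNumber r C ≠ ⊤ := by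
  obtain ⟨t, -, ht, hcover⟩ :=
    exists_finite_isCover_of_totallyBounded (div_ne_zero hr two_ne_zero) hC
  refine ne_top_of_le_ne_top (Set.encard_ne_top_iff.2 ht) ?_
  calc packingNumber r C
      = packingNumber (2 * (r / 2)) C := by rw [mul_div_cancel₀ r two_ne_zero]
    _ ≤ externalCoveringNumber (r / 2) C := packingNumber_two_mul_le_externalCoveringNumber _ _
    _ ≤ t.encard := hcover.externalCoveringNumber_le_encard

variable {E : Type*} [NormedAddCommGroup E] [NormedSpace ℝ E] [FiniteDimensional ℝ E] {C : Set E}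

lemma card_le_pow_finrank_of_separated {x : E} {r R : ℝ} {t : Finset E} (hr : 0 < r) (hR : 0 ≤ R)
    (ht : (t : Set E) ⊆ closedBall x R) (hsep : (t : Set E).Pairwise (r ≤ dist · ·)) :
    (#t : ℝ) ≤ (1 + 2 * R / r) ^ finrank ℝ E := by
  borelize E
  let μ : Measure E := Measure.addHaar
  have hunit : 0 < μ.real (ball 0 1) :=
    ENNReal.toReal_pos (measure_ball_pos μ 0 one_pos).ne' measure_ball_lt_top.ne
  have hball (y : E) {s : ℝ} (hs : 0 < s) :
      μ.real (ball y s) = s ^ finrank ℝ E * μ.real (ball 0 1) := by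
    rw [measureReal_def, μ.addHaar_ball_of_pos y hs, ENNReal.toReal_mul,
      ENNReal.toReal_ofReal (by positivity), measureReal_def]
  have hdisj : (t : Set E).PairwiseDisjoint fun y => ball y (r / 2) := fun y hy z hz hyz =>
    ball_disjoint_ball (by linarith [hsep hy hz hyz])
  have hsub : ⋃ y ∈ t, ball y (r / 2) ⊆ ball x (R + r / 2) :=
    Set.iUnion₂_subset fun y hy => ball_subset_ball' (by linarith [mem_closedBall.1 (ht hy)])
  have hvol : #t * (r / 2) ^ finrank ℝ E * μ.real (ball 0 1) ≤
      (R + r / 2) ^ finrank ℝ E * μ.real (ball 0 1) :=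
    calc #t * (r / 2) ^ finrank ℝ E * μ.real (ball 0 1)
        = ∑ y ∈ t, μ.real (ball y (r / 2)) := by
          simp only [hball _ (half_pos hr), sum_const, nsmul_eq_mul, mul_assoc]
      _ = μ.real (⋃ y ∈ t, ball y (r / 2)) :=
          (measureReal_biUnion_finset hdisj (fun _ _ => measurableSet_ball)
            fun _ _ => measure_ball_lt_top.ne).symm
      _ ≤ μ.real (ball x (R + r / 2)) := measureReal_mono hsub measure_ball_lt_top.ne
      _ = (R + r / 2) ^ finrank ℝ E * μ.real (ball 0 1) := hball x (by positivity)
  calc (#t : ℝ) ≤ (R + r / 2) ^ finrank ℝ E / (r / 2) ^ finrank ℝ E :=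
        (le_div_iff₀ (by positivity)).2 (le_of_mul_le_mul_right hvol hunit)
    _ = (1 + 2 * R / r) ^ finrank ℝ E := by
        rw [← div_pow]
        congr 1
        field_simp
        ring

lemma exists_finset_cover_card_le {r : ℝ} (hr : 0 < r) (hC : Bornology.IsBounded C) :
    ∃ t : Finset E, (t : Set E) ⊆ C ∧ (∀ x ∈ C, ∃ y ∈ t, dist x y ≤ r) ∧
      (#t : ℝ) ≤ (1 + 2 * diam C / r) ^ finrank ℝ E := by
  lift r to ℝ≥0 using hr.le
  have : ProperSpace E := FiniteDimensional.proper ℝ E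
  have hfin : packingNumber r C ≠ ⊤ :=
    packingNumber_ne_top_of_totallyBounded (NNReal.coe_ne_zero.1 hr.ne')
      (hC.isCompact_closure.totallyBounded.subset subset_closure)
  have hS : (maximalSeparatedSet r C).Finite :=
    Set.encard_ne_top_iff.1 (encard_maximalSeparatedSet hfin ▸ hfin)
  lift maximalSeparatedSet r C to Finset E using hS with t ht
  have htC : (t : Set E) ⊆ C := ht ▸ maximalSeparatedSet_subset
  refine ⟨t, htC, fun x hx => ?_, ?_⟩
  · obtain ⟨y, hy, hxy⟩ := isCover_maximalSeparatedSet hfin hx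
    exact ⟨y, mem_coe.1 (ht ▸ hy), edist_le_coe.1 hxy⟩
  · rcases t.eq_empty_or_nonempty with rfl | ⟨x, hx⟩
    · simpa using by positivity
    · refine card_le_pow_finrank_of_separated hr diam_nonneg
        (fun y hy => dist_le_diam_of_mem hC (htC hy) (htC hx)) fun y hy z hz hyz => ?_
      have hsep : IsSeparated r (t : Set E) := ht ▸ isSeparated_maximalSeparatedSet
      exact not_lt.1 fun hlt => (hsep hy hz hyz).not_ge (edist_le_coe.2 hlt.le)

lemma exists_seq_cover_card_le {r : ℝ} (hr : 0 < r) (hC : Bornology.IsBounded C) :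
    ∃ (n : ℕ) (c : ℕ → E), (∀ k < n, c k ∈ C) ∧ (∀ x ∈ C, ∃ k < n, dist x (c k) ≤ r) ∧
      (n : ℝ) ≤ (1 + 2 * diam C / r) ^ finrank ℝ E := by
  obtain ⟨t, htC, hcover, hcard⟩ := exists_finset_cover_card_le hr hC
  have hget (k : ℕ) (hk : k < #t) : t.toList.getD k 0 = t.toList[k]'(by simpa using hk) :=
    List.getD_eq_getElem _ _ _
  refine ⟨#t, fun k => t.toList.getD k 0, fun k hk => ?_, fun x hx => ?_, hcard⟩
  · simpa only [hget k hk] using htC (mem_toList.1 (List.getElem_mem _))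
  · obtain ⟨y, hy, hxy⟩ := hcover x hx
    obtain ⟨k, hk, rfl⟩ := List.getElem_of_mem (mem_toList.2 hy)
    rw [length_toList] at hk
    exact ⟨k, hk, by simpa only [hget k hk] using hxy⟩

theorem exists_isLipschitzApproxBasis_card_le {L ε : ℝ} (hC : Bornology.IsBounded C) (hL : 0 < L)
    (hε : 0 < ε) :
    ∃ d : ℕ, (d : ℝ) ≤ ⌈8 / ε⌉₊ * (1 + 8 * diam C * L / ε) ^ finrank ℝ E ∧
      ∃ f : Fin d → E → ℝ, IsLipschitzApproxBasis C L ε f := by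
  have hr : 0 < ε / (4 * L) := by positivity
  obtain ⟨n, c, hc, hcover, hn⟩ := exists_seq_cover_card_le hr hC
  have hdiam : 2 * diam C / (ε / (4 * L)) = 8 * diam C * L / ε := by field_simp; ring
  have hNL : 2 / (ε / (4 * L)) ≤ ⌈8 / ε⌉₊ * L :=
    calc 2 / (ε / (4 * L)) = 8 / ε * L := by field_simp; ring
      _ ≤ ⌈8 / ε⌉₊ * L := by gcongr; exact Nat.le_ceil _
  have herror : L * (2 * (ε / (4 * L))) < ε :=
    calc L * (2 * (ε / (4 * L))) = ε / 2 := by field_simp; ring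
      _ < ε := half_lt_self hε
  refine ⟨⌈8 / ε⌉₊ * n, ?_, _,
    (isLipschitzApproxBasis_bumpPartition hr hNL herror hc hcover).comp_equiv
      finProdFinEquiv.symm⟩
  rw [Nat.cast_mul, ← hdiam]
  gcongr

end Covering

lemma natCeil_mul_pow_le {D L ε : ℝ} (m : ℕ) (hD : 0 ≤ D) (hL : 0 ≤ L) (hε : 0 < ε) (hε1 : ε ≤ 1) :
    ⌈8 / ε⌉₊ * (1 + 8 * D * L / ε) ^ m ≤ 9 * (1 + 8 * D) ^ m * max L 1 ^ m / ε ^ (m + 1) := by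
  have hceil : (⌈8 / ε⌉₊ : ℝ) ≤ 9 / ε :=
    calc (⌈8 / ε⌉₊ : ℝ) ≤ 8 / ε + 1 := (Nat.ceil_lt_add_one (by positivity)).le
      _ ≤ 8 / ε + 1 / ε := by gcongr; exact one_le_one_div hε hε1
      _ = 9 / ε := by ring
  have hbase : 1 + 8 * D * L / ε ≤ (1 + 8 * D) * (max L 1 / ε) :=
    calc 1 + 8 * D * L / ε ≤ max L 1 / ε + 8 * D * max L 1 / ε := by
          gcongr
          · exact (one_le_div hε).2 (hε1.trans (le_max_right _ _))
          · exact le_max_left _ _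
      _ = (1 + 8 * D) * (max L 1 / ε) := by ring
  calc ⌈8 / ε⌉₊ * (1 + 8 * D * L / ε) ^ m
      ≤ 9 / ε * ((1 + 8 * D) * (max L 1 / ε)) ^ m := by gcongr
    _ = 9 * (1 + 8 * D) ^ m * max L 1 ^ m / ε ^ (m + 1) := by
        rw [mul_pow, div_pow, pow_succ]
        field_simp

theorem lipschitz_basis_general (m : ℕ) (α : ℝ) :
    ∃ κ : ℝ, 0 < κ ∧
      ∀ (E : Type*) [NormedAddCommGroup E] [NormedSpace ℝ E] [FiniteDimensional ℝ E],
      Module.finrank ℝ E = m →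
      ∀ C : Set E, Bornology.IsBounded C → Metric.diam C ≤ α →
      ∀ L : ℝ, 0 < L → ∀ ε : ℝ, 0 < ε →
        ∃ d : ℕ, (d : ℝ) ≤ κ * max L 1 ^ m / ε ^ (m + 1) ∧
          ∃ f : Fin d → E → ℝ, IsLipschitzApproxBasis C L ε f := by
  refine ⟨9 * (1 + 8 * |α|) ^ m, by positivity, ?_⟩
  rintro E _ _ _ rfl C hC hα L hL ε hε
  rcases lt_or_ge 1 ε with hε1 | hε1
  · exact ⟨0, by rw [Nat.cast_zero]; positivity, 0, isLipschitzApproxBasis_of_isEmpty hε1 _⟩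
  obtain ⟨d, hd, hbasis⟩ := exists_isLipschitzApproxBasis_card_le hC hL hε
  refine ⟨d, hd.trans ((natCeil_mul_pow_le _ Metric.diam_nonneg hL.le hε hε1).trans ?_), hbasis⟩
  gcongr
  exact hα.trans (le_abs_self α)

/-- **A finite approximate basis for bounded Lipschitz functions.**
Let `C ⊆ ℝ^m` be compact with diameter at most `α`, and for `L ≥ 1` let `W_L` be the set
of functions `w : C → [0,1]` with Lipschitz constant at most `L`. There is a constant
`κ > 0`, depending only on the dimension `m` and on `α`, such that for every `ε > 0`
there exist `d ≤ κ L^m / ε^(m+1)` functions `f_1, …, f_d ∈ W_L` such that every `w ∈ W_L`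
admits coefficients `ϖ ∈ [0,1]^d` with `max_{x ∈ C} |w(x) − ∑ i, ϖ_i f_i(x)| < ε`. -/
theorem lipschitz_basis
    (m : ℕ) (hm : 1 ≤ m) (α : ℝ) :
    ∃ κ : ℝ, 0 < κ ∧
      ∀ C : Set (EuclideanSpace ℝ (Fin m)), IsCompact C → Metric.diam C ≤ α →
      ∀ L : ℝ, 1 ≤ L → ∀ ε : ℝ, 0 < ε →
        ∃ d : ℕ, (d : ℝ) ≤ κ * L ^ m / ε ^ (m + 1) ∧
          ∃ f : Fin d → EuclideanSpace ℝ (Fin m) → ℝ,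
            (∀ i, (∀ x ∈ C, f i x ∈ Set.Icc (0 : ℝ) 1) ∧
              ∀ x ∈ C, ∀ y ∈ C, |f i x - f i y| ≤ L * ‖x - y‖) ∧
            ∀ w : EuclideanSpace ℝ (Fin m) → ℝ,
              (∀ x ∈ C, w x ∈ Set.Icc (0 : ℝ) 1) →
              (∀ x ∈ C, ∀ y ∈ C, |w x - w y| ≤ L * ‖x - y‖) →
              ∃ ϖ : Fin d → ℝ, (∀ i, ϖ i ∈ Set.Icc (0 : ℝ) 1) ∧
                ∀ x ∈ C, |w x - ∑ i, ϖ i * f i x| < ε := by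
  obtain ⟨κ, hκ, h⟩ := lipschitz_basis_general m α
  exact ⟨κ, hκ, fun C hC hα L hL ε hε => by
    simpa [IsLipschitzApproxBasis, lipschitzUnitOn, dist_eq_norm, max_eq_left hL] using
      h (EuclideanSpace ℝ (Fin m)) finrank_euclideanSpace_fin C hC.isBounded hα L
        (zero_lt_one.trans_le hL) ε hε⟩
end
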